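/- Let χ_n be the Gram matrix of the Euler pairing of the exceptional collection O_{ℓ_1}(−1),...,O_{ℓ_n}(−1), O(−2h), O(−h) on dP_n: the (n+2)×(n+2) upper unitriangular matrix with χ(i, n+1) = χ(i, n+2) = −1 for 1 ≤ i ≤ n, χ(n+1, n+2) = 3, other off-diagonal entries zero. Then the characteristic polynomial of S_n = χ_n^{-1} χ_n^T is (λ−1)^n (λ^2 + (7−n)λ + 1). -/

import Mathlib

open Matrix

open Polynomial

/-- For `1 ≤ n ≤ 8`, the Gram matrix `χ_n` of the Euler pairing of the exceptional
collection `O_{ℓ_1}(-1),...,O_{ℓ_n}(-1), O(-2h), O(-h)` on `dP_n` (the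
`(n+2) × (n+2)` upper unitriangular matrix with `χ(i, n+1) = χ(i, n+2) = -1` for
`i ≤ n` and `χ(n+1, n+2) = 3`) gives a Serre operator `S_n = χ_n⁻¹ χ_nᵀ` with
characteristic polynomial `(λ-1)^n (λ² + (7-n)λ + 1)`. -/
theorem stmt9 (n : ℕ) (h1 : 1 ≤ n) (h8 : n ≤ 8) :
    let χ : Matrix (Fin (n + 2)) (Fin (n + 2)) ℚ :=
      Matrix.of fun i j =>
        if i = j then 1
        else if i.val < n ∧ (j.val = n ∨ j.val = n + 1) then -1
        else if i.val = n ∧ j.val = n + 1 then 3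
        else 0
    let S := χ⁻¹ * χᵀ
    S.charpoly = (X - 1) ^ n * (X ^ 2 + C ((7 : ℚ) - n) * X + 1) := by
  intro χ S
  have hdet : χ.det = 1 := by
    rw [Matrix.det_of_upperTriangular]
    · simp [χ]
    · intro i j hij
      have h : j.val < i.val := hij
      have hne : i ≠ j := by rintro rfl; exact lt_irrefl _ h
      have h3 : ¬ (i.val < n ∧ (j.val = n ∨ j.val = n + 1)) := by omega
      have h4 : ¬ (i.val = n ∧ j.val = n + 1) := by omega
      simp only [χ, Matrix.of_apply, if_neg hne, if_neg h3, if_neg h4]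
  have key : ∀ t : ℚ, t ≠ 1 → S.charpoly.eval t =
      ((X - 1) ^ n * (X ^ 2 + C ((7 : ℚ) - n) * X + 1) : ℚ[X]).eval t := by
    intro t ht
    have ht' : t - 1 ≠ 0 := sub_ne_zero.mpr ht
    have hS : (Matrix.scalar (Fin (n + 2)) t - S).det = (t • χ - χᵀ).det := by
      have hu : IsUnit χ.det := by rw [hdet]; exact isUnit_one
      have : t • χ - χᵀ = χ * (Matrix.scalar (Fin (n + 2)) t - S) := by
        rw [mul_sub, Matrix.mul_nonsing_inv_cancel_left _ _ hu]
        congr 1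
        ext i j
        simp [mul_comm]
      rw [this, Matrix.det_mul, hdet, one_mul]
    have hB : (t • χ - χᵀ).submatrix (finSumFinEquiv : Fin n ⊕ Fin 2 ≃ _) finSumFinEquiv =
        Matrix.fromBlocks (Matrix.diagonal fun _ => t - 1) (Matrix.of fun _ _ => -t)
          (Matrix.of fun _ _ => 1) !![t - 1, 3 * t; -3, t - 1] := by
      ext i j
      rcases i with i | i <;> rcases j with j | j
      · have hi := i.isLt
        have hj := j.isLt
        by_cases hij : i = j
        · subst hij; simp [χ]
        · have : ¬ j = i := fun h => hij h.symm
          simp [χ, Matrix.diagonal, hij, this, hi.ne, hj.ne, (hi.trans n.lt_succ_self).ne,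
            (hj.trans n.lt_succ_self).ne]
      · have hi := i.isLt
        fin_cases j <;> simp [χ, Fin.ext_iff, hi.ne, hi.ne', (hi.trans n.lt_succ_self).ne,
            (hi.trans n.lt_succ_self).ne']
      · have hj := j.isLt
        fin_cases i <;> simp [χ, Fin.ext_iff, hj.ne, hj.ne', (hj.trans n.lt_succ_self).ne,
            (hj.trans n.lt_succ_self).ne']
      · fin_cases i <;> fin_cases j <;> simp [χ, Fin.ext_iff, mul_comm]
    letI : Invertible (Matrix.diagonal fun _ : Fin n => t - 1) :=
      ⟨Matrix.diagonal fun _ => (t - 1)⁻¹, by simp [ht'], by simp [ht']⟩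
    have hinv : ⅟(Matrix.diagonal fun _ : Fin n => t - 1) =
      Matrix.diagonal fun _ => (t - 1)⁻¹ := rfl
    rw [Matrix.eval_charpoly, hS, ← Matrix.det_submatrix_equiv_self
      (finSumFinEquiv : Fin n ⊕ Fin 2 ≃ _), hB, Matrix.det_fromBlocks₁₁, hinv,
      Matrix.det_fin_two]
    simp [Matrix.mul_apply, Matrix.diagonal_apply]
    left
    field_simp
    ring
  apply Polynomial.eq_of_infinite_eval_eq
  apply Set.Infinite.mono (s := {(1 : ℚ)}ᶜ)
  · intro t ht
    exact key t ht
  · exact (Set.finite_singleton _).infinite_compl
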